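/- Let n, m ≥ 1. The negative adjoint div' of the diagonal gradient pair (∇^{xy}, ∇^{yx}) is the operator satisfying ⟨div' f, w⟩ = −⟨f¹, ∇^{xy}w⟩ − ⟨f², ∇^{yx}w⟩ for all w and every vector field f = (f¹, f²). It is given explicitly by (div' f)_{i,j} = −(the coefficient of w_{i,j} in ⟨f¹,∇^{xy}w⟩ + ⟨f²,∇^{yx}w⟩), which for interior pixels (0 < i < n−1, 0 < j < m−1, using the Neumann conventions) equals (1/√2)(f¹_{i,j} − f¹_{i−1,j−1} + f²_{i,j} − f²_{i+1,j−1}). -/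

import Mathlib

/-- Discrete diagonal gradient (direction (1,1)) with Neumann boundary conditions. -/
noncomputable def gradXY {n m : ℕ} (u : Fin n × Fin m → ℝ) (q : Fin n × Fin m) : ℝ :=
  if h : (q.1 : ℕ) + 1 < n ∧ (q.2 : ℕ) + 1 < m then
    (Real.sqrt 2)⁻¹ * (u (⟨(q.1 : ℕ) + 1, h.1⟩, ⟨(q.2 : ℕ) + 1, h.2⟩) - u q)
  else 0

/-- Discrete diagonal gradient (direction (-1,1)) with Neumann boundary conditions. -/
noncomputable def gradYX {n m : ℕ} (u : Fin n × Fin m → ℝ) (q : Fin n × Fin m) : ℝ :=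
  if h : 0 < (q.1 : ℕ) ∧ (q.2 : ℕ) + 1 < m then
    (Real.sqrt 2)⁻¹ *
      (u (⟨(q.1 : ℕ) - 1, lt_of_le_of_lt (Nat.sub_le _ _) q.1.isLt⟩,
          ⟨(q.2 : ℕ) + 1, h.2⟩) - u q)
  else 0

/-- The diagonal discrete divergence: the negative adjoint of the diagonal
gradient pair `(∇^{xy}, ∇^{yx})`. -/
noncomputable def divv' {n m : ℕ} (f1 f2 : Fin n × Fin m → ℝ) (q : Fin n × Fin m) : ℝ :=
  (Real.sqrt 2)⁻¹ *
    ((if (q.1 : ℕ) + 1 < n ∧ (q.2 : ℕ) + 1 < m then f1 q else 0) -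
      (if 0 < (q.1 : ℕ) ∧ 0 < (q.2 : ℕ) then
        f1 (⟨(q.1 : ℕ) - 1, lt_of_le_of_lt (Nat.sub_le _ _) q.1.isLt⟩,
            ⟨(q.2 : ℕ) - 1, lt_of_le_of_lt (Nat.sub_le _ _) q.2.isLt⟩) else 0) +
      (if 0 < (q.1 : ℕ) ∧ (q.2 : ℕ) + 1 < m then f2 q else 0) -
      (if h : (q.1 : ℕ) + 1 < n ∧ 0 < (q.2 : ℕ) then
        f2 (⟨(q.1 : ℕ) + 1, h.1⟩,
            ⟨(q.2 : ℕ) - 1, lt_of_le_of_lt (Nat.sub_le _ _) q.2.isLt⟩) else 0))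

/-! Each diagonal gradient is a forward difference along a partial bijection of the pixel grid, the
Neumann condition being that it vanishes where the bijection is undefined. Summation by parts along
a partial bijection `e` is the reindexing of the pairs `(x, e x)` by their second component; applied
to the two diagonal shifts it produces the divergence. -/

lemma sum_option_toFinset {α M : Type*} [AddCommMonoid M] (o : Option α) (F : α → M) :
    ∑ x ∈ o.toFinset, F x = o.elim 0 F := by
  cases o <;> simp

lemma sum_pequiv_elim_comm {α β M : Type*} [Fintype α] [Fintype β] [AddCommMonoid M]
    (e : α ≃. β) (F : α → β → M) :
    ∑ x, (e x).elim 0 (F x) = ∑ y, (e.symm y).elim 0 fun x => F x y := by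
  simp only [← sum_option_toFinset]
  exact Finset.sum_comm' fun x y => by simp [← e.mem_iff_mem]

section SummationByParts

variable {α R : Type*}

/-- The forward difference of `u` along a partial bijection `e`, set to zero where `e` is undefined
(the Neumann condition). -/
def diffAlong [AddGroup R] (e : α ≃. α) (u : α → R) (x : α) : R :=
  (e x).elim 0 fun y => u y - u x

/-- The divergence along a partial bijection `e`, the negative adjoint of `diffAlong e`: outflow
where `e` is defined minus inflow where `e.symm` is defined. -/
def divAlong [AddGroup R] (e : α ≃. α) (f : α → R) (x : α) : R :=
  ((e x).elim 0 fun _ => f x) - (e.symm x).elim 0 f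

theorem sum_divAlong_mul [Fintype α] [NonUnitalNonAssocRing R] (e : α ≃. α) (f w : α → R) :
    ∑ x, divAlong e f x * w x = -∑ x, f x * diffAlong e w x := by
  have divAlong_mul (x : α) : divAlong e f x * w x =
      ((e x).elim 0 fun _ => f x * w x) - (e.symm x).elim 0 fun y => f y * w x := by
    unfold divAlong
    cases e x <;> cases e.symm x <;> simp [sub_mul]
  have mul_diffAlong (x : α) : f x * diffAlong e w x =
      ((e x).elim 0 fun y => f x * w y) - (e x).elim 0 fun _ => f x * w x := by
    unfold diffAlong
    cases e x <;> simp [mul_sub]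
  simp only [divAlong_mul, mul_diffAlong, Finset.sum_sub_distrib, neg_sub]
  rw [sum_pequiv_elim_comm e fun x y => f x * w y]

end SummationByParts

/-- The product of two partial bijections, defined where both factors are. -/
def pequivProd {α β γ δ : Type*} (e : α ≃. β) (e' : γ ≃. δ) : α × γ ≃. β × δ where
  toFun p := Option.map₂ Prod.mk (e p.1) (e' p.2)
  invFun p := Option.map₂ Prod.mk (e.symm p.1) (e'.symm p.2)
  inv p q := by
    simp only [Option.map₂_eq_some_iff, Option.mem_def, Prod.ext_iff]
    simp [e.eq_some_iff, e'.eq_some_iff]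

lemma pequivProd_apply {α β γ δ : Type*} (e : α ≃. β) (e' : γ ≃. δ) (p : α × γ) :
    pequivProd e e' p = Option.map₂ Prod.mk (e p.1) (e' p.2) :=
  rfl

lemma pequivProd_symm {α β γ δ : Type*} (e : α ≃. β) (e' : γ ≃. δ) :
    (pequivProd e e').symm = pequivProd e.symm e'.symm :=
  rfl

/-- The shift `i ↦ i + 1` as a partial bijection of `Fin n`, undefined at the last index. -/
def succShift (n : ℕ) : Fin n ≃. Fin n where
  toFun i := if h : (i : ℕ) + 1 < n then some ⟨i + 1, h⟩ else none
  invFun i := if 0 < (i : ℕ) then some ⟨i - 1, (Nat.sub_le _ _).trans_lt i.isLt⟩ else none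
  inv i j := by grind

lemma succShift_apply {n : ℕ} (i : Fin n) :
    succShift n i = if h : (i : ℕ) + 1 < n then some ⟨i + 1, h⟩ else none :=
  rfl

lemma succShift_symm_apply {n : ℕ} (i : Fin n) :
    (succShift n).symm i =
      if 0 < (i : ℕ) then some ⟨i - 1, (Nat.sub_le _ _).trans_lt i.isLt⟩ else none :=
  rfl

/-- The partial bijection `(i, j) ↦ (i + 1, j + 1)` of the pixel grid. -/
def shiftXY (n m : ℕ) : Fin n × Fin m ≃. Fin n × Fin m :=
  pequivProd (succShift n) (succShift m)

/-- The partial bijection `(i, j) ↦ (i - 1, j + 1)` of the pixel grid. -/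
def shiftYX (n m : ℕ) : Fin n × Fin m ≃. Fin n × Fin m :=
  pequivProd (succShift n).symm (succShift m)

section DiagonalOperators

variable {n m : ℕ}

lemma gradXY_eq_diffAlong (u : Fin n × Fin m → ℝ) (q : Fin n × Fin m) :
    gradXY u q = (√2)⁻¹ * diffAlong (shiftXY n m) u q := by
  simp only [gradXY, diffAlong, shiftXY, pequivProd_apply, succShift_apply]
  split_ifs <;> simp_all

lemma gradYX_eq_diffAlong (u : Fin n × Fin m → ℝ) (q : Fin n × Fin m) :
    gradYX u q = (√2)⁻¹ * diffAlong (shiftYX n m) u q := by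
  simp only [gradYX, diffAlong, shiftYX, pequivProd_apply, succShift_apply, succShift_symm_apply]
  split_ifs <;> simp_all

lemma divv'_eq_divAlong_add_divAlong (f1 f2 : Fin n × Fin m → ℝ) (q : Fin n × Fin m) :
    divv' f1 f2 q =
      (√2)⁻¹ * (divAlong (shiftXY n m) f1 q + divAlong (shiftYX n m) f2 q) := by
  simp only [divv', divAlong, shiftXY, shiftYX, pequivProd_symm, PEquiv.symm_symm,
    pequivProd_apply, succShift_apply, succShift_symm_apply]
  split_ifs <;> simp_all <;> ring

end DiagonalOperators

/-- The explicit formula for the diagonal divergence: it is the negative adjoint of the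
diagonal gradient pair, and at interior pixels it is given by
`(1/√2)(f¹_{i,j} − f¹_{i−1,j−1} + f²_{i,j} − f²_{i+1,j−1})`. -/
theorem divv'_adjoint_and_interior_formula (n m : ℕ) (hn : 1 ≤ n) (hm : 1 ≤ m) :
    (∀ f1 f2 w : Fin n × Fin m → ℝ,
      ∑ q : Fin n × Fin m, divv' f1 f2 q * w q =
        -(∑ q : Fin n × Fin m, f1 q * gradXY w q) -
          ∑ q : Fin n × Fin m, f2 q * gradYX w q) ∧
    (∀ f1 f2 : Fin n × Fin m → ℝ, ∀ q : Fin n × Fin m,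
      ∀ hi0 : 0 < (q.1 : ℕ), ∀ hi1 : (q.1 : ℕ) + 1 < n,
      ∀ hj0 : 0 < (q.2 : ℕ), ∀ hj1 : (q.2 : ℕ) + 1 < m,
      divv' f1 f2 q =
        (Real.sqrt 2)⁻¹ *
          (f1 q -
            f1 (⟨(q.1 : ℕ) - 1, lt_of_le_of_lt (Nat.sub_le _ _) q.1.isLt⟩,
                ⟨(q.2 : ℕ) - 1, lt_of_le_of_lt (Nat.sub_le _ _) q.2.isLt⟩) +
            f2 q -
            f2 (⟨(q.1 : ℕ) + 1, hi1⟩,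
                ⟨(q.2 : ℕ) - 1, lt_of_le_of_lt (Nat.sub_le _ _) q.2.isLt⟩))) := by
  constructor
  · intro f1 f2 w
    calc ∑ q, divv' f1 f2 q * w q
        = (√2)⁻¹ * (∑ q, divAlong (shiftXY n m) f1 q * w q +
            ∑ q, divAlong (shiftYX n m) f2 q * w q) := by
          simp only [divv'_eq_divAlong_add_divAlong, mul_assoc, add_mul, ← Finset.mul_sum,
            Finset.sum_add_distrib]
      _ = (√2)⁻¹ * (-∑ q, f1 q * diffAlong (shiftXY n m) w q -
            ∑ q, f2 q * diffAlong (shiftYX n m) w q) := by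
          rw [sum_divAlong_mul, sum_divAlong_mul, sub_eq_add_neg]
      _ = -(∑ q, f1 q * gradXY w q) - ∑ q, f2 q * gradYX w q := by
          simp only [gradXY_eq_diffAlong, gradYX_eq_diffAlong, mul_left_comm _ (√2)⁻¹,
            ← Finset.mul_sum, mul_sub, mul_neg]
  · intro f1 f2 q hi0 hi1 hj0 hj1
    simp [divv', hi0, hi1, hj0, hj1]
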